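/- Let (T, R, A) be weakly G-quasiapproximable. Then there exists b ≥ 0 such that for every integer i and every positive integer j, R_i ∩ T^c ⊆ ∪_{|n| ≤ (j+2b)A} Σ^n (R_{i+j} ∩ T^c). -/

import Mathlib

namespace GApprox

open CategoryTheory CategoryTheory.Limits CategoryTheory.Pretriangulated

universe w v u

variable (C : Type u) [Category.{v} C] [HasZeroObject C] [HasShift C ℤ]
  [Preadditive C] [∀ n : ℤ, (shiftFunctor C n).Additive] [Pretriangulated C]
  [HasCoproducts.{v} C]

/-- The right orthogonal of a class of objects. -/
def rOrth (A : Set C) : Set C := {X | ∀ a ∈ A, ∀ f : a ⟶ X, f = 0}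

/-- The left orthogonal of a class of objects. -/
def lOrth (A : Set C) : Set C := {X | ∀ a ∈ A, ∀ f : X ⟶ a, f = 0}

/-- `Hom(A, B) = 0`. -/
def homZero (A B : Set C) : Prop := ∀ a ∈ A, ∀ b ∈ B, ∀ f : a ⟶ b, f = 0

/-- The star operation `A ⋆ B`: objects `Y` admitting a distinguished triangle
`X ⟶ Y ⟶ Z ⟶ ΣX` with `X ∈ A` and `Z ∈ B`. -/
def starSet (A B : Set C) : Set C :=
  {Y | ∃ (X Z : C) (f : X ⟶ Y) (g : Y ⟶ Z) (h : Z ⟶ X⟦(1 : ℤ)⟧),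
    Triangle.mk f g h ∈ (distTriang C) ∧ X ∈ A ∧ Z ∈ B}

/-- The (strictly full) shift `Σⁿ A` of a class of objects. -/
def shiftSet (n : ℤ) (A : Set C) : Set C :=
  {X | ∃ a ∈ A, Nonempty (X ≅ (shiftFunctor C n).obj a)}

/-- An object is compact if any map to a coproduct factors through a finite subcoproduct. -/
def IsCompactObj (X : C) : Prop :=
  ∀ (α : Type v) (f : α → C) (g : X ⟶ ∐ f),
    ∃ (s : Finset α) (h : X ⟶ ∐ (fun i : {a : α // a ∈ s} => f i.1)),
      g = h ≫ Sigma.desc (fun i => Sigma.ι f i.1)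

/-- The class of compact objects `T^c`. -/
def compacts : Set C := {X | IsCompactObj C X}

/-- The category is compactly generated. -/
def CompactlyGenerated : Prop :=
  ∀ X : C, (∀ K ∈ compacts C, ∀ f : K ⟶ X, f = 0) → IsZero X

/-- Closure under direct summands (retracts), `smd`. -/
def smd (A : Set C) : Set C :=
  {X | ∃ Y ∈ A, ∃ (i : X ⟶ Y) (r : Y ⟶ X), i ≫ r = 𝟙 X}

/-- Closure of a class of objects under finite direct sums and extensions (`coprod`). -/
inductive extClosure (U : Set C) : C → Prop
  | of {X : C} : X ∈ U → extClosure U X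
  | zero {X : C} : IsZero X → extClosure U X
  | ext {X Y Z : C} (f : X ⟶ Y) (g : Y ⟶ Z) (h : Z ⟶ X⟦(1 : ℤ)⟧) :
      Triangle.mk f g h ∈ (distTriang C) → extClosure U X → extClosure U Z → extClosure U Y

/-- Closure of a class of objects under arbitrary coproducts, extensions and
direct summands. -/
inductive bigClosure (U : Set C) : C → Prop
  | of {X : C} : X ∈ U → bigClosure U X
  | zero {X : C} : IsZero X → bigClosure U X
  | coprod {α : Type v} (f : α → C) :
      (∀ i, bigClosure U (f i)) → ∀ {X : C}, (X ≅ ∐ f) → bigClosure U X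
  | ext {X Y Z : C} (f : X ⟶ Y) (g : Y ⟶ Z) (h : Z ⟶ X⟦(1 : ℤ)⟧) :
      Triangle.mk f g h ∈ (distTriang C) → bigClosure U X → bigClosure U Z → bigClosure U Y
  | retract {X Y : C} (i : X ⟶ Y) (r : Y ⟶ X) :
      i ≫ r = 𝟙 X → bigClosure U Y → bigClosure U X

/-- Closure of a class of objects under finite direct sums, `add`. -/
def addClosure (U : Set C) : Set C :=
  {X | ∃ (n : ℕ) (f : ULift.{v} (Fin n) → C), (∀ i, f i ∈ U) ∧ Nonempty (X ≅ ∐ f)}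

/-- Closure of a class of objects under arbitrary coproducts, `Add`. -/
def bigAddClosure (U : Set C) : Set C :=
  {X | ∃ (α : Type v) (f : α → C), (∀ i, f i ∈ U) ∧ Nonempty (X ≅ ∐ f)}

/-- `coprod_n(U)`. -/
def coprodPow (U : Set C) : ℕ → Set C
  | 0 => {X | IsZero X}
  | n + 1 => starSet C (addClosure C U) (coprodPow U n)

/-- `Coprod_n(U)`. -/
def coprodPowBig (U : Set C) : ℕ → Set C
  | 0 => {X | IsZero X}
  | n + 1 => starSet C (bigAddClosure C U) (coprodPowBig U n)

/-- `G[a,b] = ∪ { G^m : a ≤ m ≤ b }`. -/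
def unionIcc (G : ℤ → Set C) (a b : ℤ) : Set C := ⋃ m ∈ Set.Icc a b, G m

/-- `G(-∞,b] = ∪ { G^m : m ≤ b }`. -/
def unionIic (G : ℤ → Set C) (b : ℤ) : Set C := ⋃ m ∈ Set.Iic b, G m

/-- `G(-∞,∞) = ∪ { G^m : m ∈ ℤ }`. -/
def unionAll (G : ℤ → Set C) : Set C := ⋃ m : ℤ, G m

/-- `G^{[a,b]} = smd(coprod(G[a,b]))`. -/
def gInt (G : ℤ → Set C) (a b : ℤ) : Set C :=
  smd C {X | extClosure C (unionIcc C G a b) X}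

/-- `G^{(-∞,b]} = smd(coprod(G(-∞,b]))`. -/
def gIic (G : ℤ → Set C) (b : ℤ) : Set C :=
  smd C {X | extClosure C (unionIic C G b) X}

/-- `G^{[a,b]}_k = smd(coprod_k(G[a,b]))`. -/
def gIntPow (G : ℤ → Set C) (a b k : ℤ) : Set C :=
  smd C (coprodPow C (unionIcc C G a b) k.toNat)

/-- `Ḡ^{[a,b]}`. -/
def gBarInt (G : ℤ → Set C) (a b : ℤ) : Set C :=
  {X | bigClosure C (unionIcc C G a b) X}

/-- `Ḡ^{(-∞,b]}`. -/
def gBarIic (G : ℤ → Set C) (b : ℤ) : Set C :=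
  {X | bigClosure C (unionIic C G b) X}

/-- `Ḡ^{[a,b]}_k = smd(Coprod_k(G[a,b]))`. -/
def gBarIntPow (G : ℤ → Set C) (a b k : ℤ) : Set C :=
  smd C (coprodPowBig C (unionIcc C G a b) k.toNat)

/-- `M^G_n := G^{(-∞,-n]}`. -/
def MG (G : ℤ → Set C) (n : ℤ) : Set C := gIic C G (-n)

/-- `R^G_n := ⊥((M^G_n)^⊥)`, orthogonals taken in the whole category. -/
def RG (G : ℤ → Set C) (n : ℤ) : Set C := lOrth C (rOrth C (MG C G n))

/-- A pre-generating sequence. -/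
structure IsPreGenSeq (G : ℤ → Set C) : Prop where
  compact : ∀ i : ℤ, G i ⊆ compacts C
  generates : smd C {X | extClosure C (unionAll C G) X} = compacts C

/-- A generating sequence. -/
structure IsGenSeq (G : ℤ → Set C) extends IsPreGenSeq C G : Prop where
  shift_cond : ∀ n : ℤ,
    shiftSet C (-1) (G n) ∪ G n ∪ shiftSet C 1 (G n) ⊆ gInt C G (n - 1) (n + 1)

/-- A finite generating sequence. -/
structure IsFinGenSeq (G : ℤ → Set C) extends IsGenSeq C G : Prop where
  finite : ∀ i : ℤ, (G i).Finite

/-- ℕ-equivalence of generating sequences. -/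
def GenSeqNEquiv (G G' : ℤ → Set C) : Prop :=
  ∃ N : ℤ, 0 ≤ N ∧ (∀ n : ℤ, G' n ⊆ gInt C G (n - N) (n + N)) ∧
    ∀ n : ℤ, G n ⊆ gInt C G' (n - N) (n + N)

/-- ℕ-equivalence of (extended good) metrics. -/
def MetricNEquiv (M N : ℤ → Set C) : Prop :=
  ∃ n : ℤ, 0 ≤ n ∧ (∀ i : ℤ, M (i + n) ⊆ N i) ∧ ∀ i : ℤ, N (i + n) ⊆ M i

/-- An extended good metric. -/
structure IsExtGoodMetric (M : ℤ → Set C) : Prop where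
  zero_mem : ∀ (n : ℤ) (X : C), IsZero X → X ∈ M n
  iso_closed : ∀ (n : ℤ) ⦃X Y : C⦄, (X ≅ Y) → X ∈ M n → Y ∈ M n
  star_subset : ∀ n : ℤ, starSet C (M n) (M n) ⊆ M n
  shift_one : ∀ n : ℤ, shiftSet C 1 (M (n + 1)) ⊆ M n
  antitone : ∀ n : ℤ, M (n + 1) ⊆ M n
  shift_neg_one : ∀ n : ℤ, shiftSet C (-1) (M (n + 1)) ⊆ M n

/-- An orthogonal metric. -/
structure IsOrthMetric (M : ℤ → Set C) extends IsExtGoodMetric C M : Prop where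
  orth : ∀ n : ℤ, lOrth C (rOrth C (M n)) = M n

/-- The closure of the compacts `T̄^c := ∩ₙ T^c ⋆ Rₙ`. -/
def closCompacts (Rm : ℤ → Set C) : Set C := ⋂ n : ℤ, starSet C (compacts C) (Rm n)

/-- `(T, R, A)` is `G`-preapproximable. -/
structure IsGPreApprox (G Rm : ℤ → Set C) (A : ℤ) : Prop where
  orthMetric : IsOrthMetric C Rm
  A_pos : 0 < A
  cond0 : ∀ i : ℤ, MG C G i ⊆ ⋃ n ∈ {n : ℤ | |n| ≤ A}, shiftSet C n (MG C G (i + 1))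
  cond1 : ∀ i : ℤ, MG C G (i + A) ⊆ Rm i ∩ compacts C
  cond2 : ∀ n : ℤ, ∃ N : ℤ, ∀ i : ℤ, N ≤ i → homZero C (G n) (Rm i)

/-- There is a distinguished triangle `E ⟶ F ⟶ D ⟶ ΣE` with `E ∈ S` and `D ∈ D`. -/
def approxTriangle (F : C) (S D : Set C) : Prop :=
  ∃ (E Dd : C) (f : E ⟶ F) (g : F ⟶ Dd) (h : Dd ⟶ E⟦(1 : ℤ)⟧),
    Triangle.mk f g h ∈ (distTriang C) ∧ E ∈ S ∧ Dd ∈ D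

/-- `(T, R, A)` is weakly `G`-approximable. -/
structure IsWeakGApprox (G Rm : ℤ → Set C) (A : ℤ) extends IsGPreApprox C G Rm A : Prop where
  hom_vanish : ∀ n i : ℤ, A ≤ n + i → homZero C (G n) (Rm i)
  approx : ∀ i : ℤ, ∀ F ∈ Rm i,
    approxTriangle C F (gBarInt C G (-A - i) (A - i)) (Rm (i + 1))

/-- `(T, R, A)` is `G`-approximable. -/
structure IsGApprox (G Rm : ℤ → Set C) (A : ℤ) extends IsWeakGApprox C G Rm A : Prop where
  approx' : ∀ i : ℤ, ∀ F ∈ Rm i,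
    approxTriangle C F (gBarIntPow C G (-A - i) (A - i) A) (Rm (i + 1))

/-- `(T, R, A)` is weakly `G`-quasiapproximable. -/
structure IsWeakGQuasiApprox (G Rm : ℤ → Set C) (A : ℤ) extends IsGPreApprox C G Rm A : Prop where
  hom_vanish : ∀ n i : ℤ, A ≤ n + i → homZero C (G n) (Rm i)
  approx : ∀ i : ℤ, ∀ F ∈ Rm i ∩ closCompacts C Rm,
    approxTriangle C F (gBarInt C G (-A - i) (A - i)) (Rm (i + 1) ∩ closCompacts C Rm)

/-- `(T, R, A)` is `G`-quasiapproximable. -/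
structure IsGQuasiApprox (G Rm : ℤ → Set C) (A : ℤ) extends IsWeakGQuasiApprox C G Rm A : Prop where
  approx' : ∀ i : ℤ, ∀ F ∈ Rm i ∩ closCompacts C Rm,
    approxTriangle C F (gBarIntPow C G (-A - i) (A - i) A) (Rm (i + 1) ∩ closCompacts C Rm)

/-- The coproduct of a sequence of objects. -/
noncomputable def seqCoprod (E : ℕ → C) : C := ∐ (fun n : ULift.{v} ℕ => E n.down)

/-- The canonical inclusion into the coproduct of a sequence. -/
noncomputable def seqInj (E : ℕ → C) (n : ℕ) : E n ⟶ seqCoprod C E :=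
  Sigma.ι (fun n : ULift.{v} ℕ => E n.down) (ULift.up n)

/-- The map `1 - shift` on the coproduct of a sequence. -/
noncomputable def oneMinusShift (E : ℕ → C) (e : ∀ n, E n ⟶ E (n + 1)) :
    seqCoprod C E ⟶ seqCoprod C E :=
  Sigma.desc (fun n => seqInj C E n.down - e n.down ≫ seqInj C E (n.down + 1))

/-- `H`, equipped with `π`, `δ`, is a homotopy colimit of the sequence `E`. -/
def IsHocolim (E : ℕ → C) (e : ∀ n, E n ⟶ E (n + 1)) (H : C)
    (π : seqCoprod C E ⟶ H) (δ : H ⟶ (seqCoprod C E)⟦(1 : ℤ)⟧) : Prop :=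
  Triangle.mk (oneMinusShift C E e) π δ ∈ (distTriang C)

/-- A single compact generator. -/
def IsCompactGenerator (G₀ : C) : Prop :=
  IsCompactObj C G₀ ∧ ∀ X : C, (∀ n : ℤ, ∀ f : (shiftFunctor C n).obj G₀ ⟶ X, f = 0) → IsZero X

/-- The strictly full subcategory `{Σʲ G₀}`. -/
def singletonShift (G₀ : C) (j : ℤ) : Set C :=
  {X | Nonempty (X ≅ (shiftFunctor C j).obj G₀)}

/-- The generating sequence `Gⁿ := {Σ⁻ⁿ G₀}`. -/
def genSeqNeg (G₀ : C) (n : ℤ) : Set C := singletonShift C G₀ (-n)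

/-- The generating sequence `Gⁿ := {Σⁿ G₀}`. -/
def genSeqPos (G₀ : C) (n : ℤ) : Set C := singletonShift C G₀ n

open scoped ZeroObject

/-- The idempotent endomorphism of a coproduct projecting to the summands in `s`. -/
noncomputable def coprodProj {α : Type v} (f : α → C) (s : Finset α) : (∐ f) ⟶ ∐ f :=
  open Classical in Sigma.desc (fun a => if a ∈ s then Sigma.ι f a else 0)

/-- The projection of a coproduct to one summand. -/
noncomputable def coprodPi {α : Type v} (f : α → C) (a : α) : (∐ f) ⟶ f a :=
  open Classical in Sigma.desc
    (fun b => if h : b = a then eqToHom (congrArg f h) else 0)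

theorem coprodProj_eq_sum {α : Type v} (f : α → C) (s : Finset α) :
    coprodProj C f s = ∑ a ∈ s, coprodPi C f a ≫ Sigma.ι f a := by
  classical
  apply Sigma.hom_ext
  intro b
  have key : ∀ a, Sigma.ι f b ≫ coprodPi C f a ≫ Sigma.ι f a
      = if b = a then Sigma.ι f b else 0 := by
    intro a
    rw [coprodPi, Sigma.ι_desc_assoc]
    split_ifs with h
    · subst h; simp
    · simp
  rw [Preadditive.comp_sum]
  simp only [key]
  rw [coprodProj, Sigma.ι_desc]
  simp

theorem coprodProj_comp {α : Type v} (f : α → C) {s t : Finset α} (h : s ⊆ t) :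
    coprodProj C f s ≫ coprodProj C f t = coprodProj C f s := by
  classical
  apply Sigma.hom_ext
  intro b
  by_cases hb : b ∈ s
  · simp [coprodProj, hb, h hb]
  · simp [coprodProj, hb]

/-- Reformulation of compactness with idempotents. -/
theorem isCompactObj_iff (X : C) : IsCompactObj C X ↔
    ∀ (α : Type v) (f : α → C) (g : X ⟶ ∐ f), ∃ s : Finset α, g ≫ coprodProj C f s = g := by
  classical
  constructor
  · intro hX α f g
    obtain ⟨s, h, rfl⟩ := hX α f g
    refine ⟨s, ?_⟩
    rw [Category.assoc]
    congr 1
    apply Sigma.hom_ext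
    rintro ⟨b, hb⟩
    simp [coprodProj, hb]
  · intro hX α f g
    obtain ⟨s, hs⟩ := hX α f g
    refine ⟨s, g ≫ Sigma.desc (fun a => if h : a ∈ s then
      Sigma.ι (fun i : {a : α // a ∈ s} => f i.1) ⟨a, h⟩ else 0), ?_⟩
    rw [Category.assoc]
    conv_lhs => rw [← hs]
    congr 1
    apply Sigma.hom_ext
    intro b
    by_cases hb : b ∈ s
    · simp [coprodProj, hb]
    · simp [coprodProj, hb]

theorem isCompactObj_of_isZero {X : C} (hX : IsZero X) : IsCompactObj C X := by
  rw [isCompactObj_iff]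
  intro α f g
  exact ⟨∅, hX.eq_of_src _ _⟩

theorem isCompactObj_ext {X Y Z : C} (u : X ⟶ Y) (w : Y ⟶ Z) (h : Z ⟶ X⟦(1 : ℤ)⟧)
    (hT : Triangle.mk u w h ∈ (distTriang C))
    (hX : IsCompactObj C X) (hZ : IsCompactObj C Z) : IsCompactObj C Y := by
  classical
  rw [isCompactObj_iff] at *
  intro α f g
  obtain ⟨s, hs⟩ := hX α f (u ≫ g)
  obtain ⟨m, hm⟩ := Triangle.yoneda_exact₂ _ hT (g - g ≫ coprodProj C f s) (by
    change u ≫ _ = 0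
    rw [Preadditive.comp_sub, ← Category.assoc, hs, sub_self])
  change Z ⟶ _ at m
  change _ = w ≫ m at hm
  obtain ⟨t, ht⟩ := hZ α f m
  refine ⟨s ∪ t, ?_⟩
  have hg : g = g ≫ coprodProj C f s + w ≫ m ≫ coprodProj C f t := by
    rw [ht, ← hm]; abel
  rw [hg, Preadditive.add_comp]
  simp only [Category.assoc]
  rw [coprodProj_comp C f Finset.subset_union_left, coprodProj_comp C f Finset.subset_union_right]

theorem extClosure_mono {U V : Set C} (h : U ⊆ V) {X : C} (hX : extClosure C U X) :
    extClosure C V X := by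
  induction hX with
  | of hx => exact .of (h hx)
  | zero hx => exact .zero hx
  | ext f g k hT _ _ h1 h2 => exact .ext f g k hT h1 h2

theorem unionIcc_subset (G : ℤ → Set C) (a b : ℤ) : unionIcc C G a b ⊆ unionAll C G := by
  intro X hX
  simp only [unionIcc, unionAll, Set.mem_iUnion] at *
  obtain ⟨m, _, hm⟩ := hX
  exact ⟨m, hm⟩

theorem compact_of_ext {G : ℤ → Set C} (hG : IsGenSeq C G) {X : C}
    (hX : extClosure C (unionAll C G) X) : IsCompactObj C X := by
  have : X ∈ compacts C := by
    rw [← hG.generates]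
    exact ⟨X, hX, 𝟙 X, 𝟙 X, by simp⟩
  exact this

theorem compact_shift_of_ext {G : ℤ → Set C} (hG : IsGenSeq C G) {X : C}
    (hX : extClosure C (unionAll C G) X) : IsCompactObj C (X⟦(-1 : ℤ)⟧) := by
  induction hX with
  | @of X hx =>
    simp only [unionAll, Set.mem_iUnion] at hx
    obtain ⟨n, hn⟩ := hx
    have h1 : X⟦(-1 : ℤ)⟧ ∈ gInt C G (n - 1) (n + 1) :=
      hG.shift_cond n (Or.inl (Or.inl ⟨X, hn, ⟨Iso.refl _⟩⟩))
    obtain ⟨Y, hY, i, r, hir⟩ := h1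
    have : X⟦(-1 : ℤ)⟧ ∈ compacts C := by
      rw [← hG.generates]
      exact ⟨Y, extClosure_mono C (unionIcc_subset C G _ _) hY, i, r, hir⟩
    exact this
  | zero hx => exact isCompactObj_of_isZero C ((shiftFunctor C (-1 : ℤ)).map_isZero hx)
  | ext f g k hT _ _ h1 h2 =>
    exact isCompactObj_ext C _ _ _ (Triangle.shift_distinguished _ hT (-1)) h1 h2

/-- A morphism factors through an object of `coprod(U)`. -/
def FactorsExt (U : Set C) {K X : C} (φ : K ⟶ X) : Prop :=
  ∃ (E : C) (a : K ⟶ E) (b : E ⟶ X), extClosure C U E ∧ φ = a ≫ b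

theorem FactorsExt.zero {U : Set C} {K X : C} : FactorsExt C U (0 : K ⟶ X) :=
  ⟨0, 0, 0, .zero (isZero_zero C), by simp⟩

theorem FactorsExt.comp {U : Set C} {K X Y : C} {φ : K ⟶ X} (h : FactorsExt C U φ)
    (g : X ⟶ Y) : FactorsExt C U (φ ≫ g) := by
  obtain ⟨E, a, b, hE, rfl⟩ := h
  exact ⟨E, a, b ≫ g, hE, by simp⟩

theorem FactorsExt.add {U : Set C} {K X : C} {φ ψ : K ⟶ X} (h : FactorsExt C U φ)
    (h' : FactorsExt C U ψ) : FactorsExt C U (φ + ψ) := by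
  obtain ⟨E, a, b, hE, rfl⟩ := h
  obtain ⟨E', a', b', hE', rfl⟩ := h'
  have : HasBinaryBiproduct E E' := (hasBinaryBiproducts_of_finite_biproducts C).has_binary_biproduct E E'
  refine ⟨E ⊞ E', biprod.lift a a', biprod.desc b b', ?_, by simp⟩
  exact .ext _ _ _ (binaryBiproductTriangle_distinguished E E') hE hE'

theorem FactorsExt.sum {U : Set C} {K X : C} {α : Type v} (s : Finset α) (φ : α → (K ⟶ X))
    (h : ∀ a, FactorsExt C U (φ a)) : FactorsExt C U (∑ a ∈ s, φ a) := by
  classical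
  induction s using Finset.induction_on with
  | empty => simpa using FactorsExt.zero C
  | insert a s ha ih => rw [Finset.sum_insert ha]; exact (h a).add C ih

/-- The extension step. -/
theorem FactorsExt.ext {G : ℤ → Set C} (hG : IsGenSeq C G) {U : Set C}
    (hU : U ⊆ unionAll C G) {X Y Z : C} (f : X ⟶ Y) (g : Y ⟶ Z) (h : Z ⟶ X⟦(1 : ℤ)⟧)
    (hT : Triangle.mk f g h ∈ (distTriang C))
    (hX : ∀ (K : C) (φ : K ⟶ X), IsCompactObj C K → FactorsExt C U φ)
    {K : C} (hK : IsCompactObj C K) (φ : K ⟶ Y) (hφ : FactorsExt C U (φ ≫ g)) :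
    FactorsExt C U φ := by
  obtain ⟨Z', p, q, hZ', hpq⟩ := hφ
  obtain ⟨K', i, d, hT'⟩ := distinguished_cocone_triangle₁ p
  have hK' : IsCompactObj C K' :=
    isCompactObj_ext C _ _ _ (inv_rot_of_distTriang _ hT')
      (compact_shift_of_ext C hG (extClosure_mono C hU hZ')) hK
  obtain ⟨c, hc1, hc2⟩ := complete_distinguished_triangle_morphism₁ _ _ hT' hT φ q hpq.symm
  change K' ⟶ X at c
  change i ≫ φ = c ≫ f at hc1
  change d ≫ c⟦(1 : ℤ)⟧' = q ≫ h at hc2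
  obtain ⟨X', a, b, hX', hab⟩ := hX K' c hK'
  obtain ⟨Y', f', g', hT''⟩ := distinguished_cocone_triangle₂ (d ≫ a⟦(1 : ℤ)⟧')
  have hY' : extClosure C U Y' := .ext _ _ _ hT'' hX' hZ'
  obtain ⟨m, hm1, hm2⟩ := complete_distinguished_triangle_morphism₂ _ _ hT' hT'' a (𝟙 Z')
    (Category.id_comp (d ≫ a⟦(1 : ℤ)⟧')).symm
  change K ⟶ Y' at m
  change p ≫ 𝟙 _ = m ≫ g' at hm2
  obtain ⟨l, hl1, hl2⟩ := complete_distinguished_triangle_morphism₂ _ _ hT'' hT b q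
    (by
      change (d ≫ a⟦(1 : ℤ)⟧') ≫ b⟦(1 : ℤ)⟧' = q ≫ h
      rw [← hc2, hab, Functor.map_comp, Category.assoc])
  change Y' ⟶ Y at l
  change g' ≫ q = l ≫ g at hl2
  obtain ⟨e, he⟩ := Triangle.coyoneda_exact₂ _ hT (φ - m ≫ l) (by
    change _ ≫ g = 0
    rw [Preadditive.sub_comp, Category.assoc, ← hl2, ← Category.assoc, ← hm2, hpq]
    simp)
  change K ⟶ X at e
  change _ = e ≫ f at he
  have : φ = m ≫ l + e ≫ f := by rw [← he]; abel
  rw [this]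
  exact FactorsExt.add C ⟨Y', m, l, hY', rfl⟩ ((hX K e hK).comp C f)

theorem factors_of_big {G : ℤ → Set C} (hG : IsGenSeq C G) {U : Set C}
    (hU : U ⊆ unionAll C G) {X : C} (hX : bigClosure C U X) :
    ∀ (K : C) (φ : K ⟶ X), IsCompactObj C K → FactorsExt C U φ := by
  induction hX with
  | @of X hx => intro K φ _; exact ⟨X, φ, 𝟙 X, .of hx, by simp⟩
  | zero hx => intro K φ _; rw [hx.eq_of_tgt φ 0]; exact FactorsExt.zero C
  | coprod f _ e ih =>
    intro K φ hK
    obtain ⟨s, hs⟩ := (isCompactObj_iff C K).1 hK _ f (φ ≫ e.hom)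
    have : φ = (∑ a ∈ s, ((φ ≫ e.hom) ≫ coprodPi C f a) ≫ Sigma.ι f a) ≫ e.inv := by
      rw [coprodProj_eq_sum, Preadditive.comp_sum] at hs
      rw [Iso.eq_comp_inv]
      refine hs.symm.trans ?_
      simp only [Category.assoc]
    rw [this]
    exact (FactorsExt.sum C s _ (fun a => (ih a K _ hK).comp C _)).comp C _
  | ext f g h hT _ _ h1 h2 =>
    intro K φ hK
    exact FactorsExt.ext C hG hU f g h hT h1 hK φ (h2 K _ hK)
  | retract i r hir _ ih =>
    intro K φ hK
    have : φ = (φ ≫ i) ≫ r := by simp [hir]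
    rw [this]
    exact (ih K _ hK).comp C r

theorem bigClosure_mono {U V : Set C} (h : U ⊆ V) {X : C} (hX : bigClosure C U X) :
    bigClosure C V X := by
  induction hX with
  | of hx => exact .of (h hx)
  | zero hx => exact .zero hx
  | coprod f _ e ih => exact .coprod f ih e
  | ext f g k hT _ _ h1 h2 => exact .ext f g k hT h1 h2
  | retract i r hir _ ih => exact .retract i r hir ih

theorem unionIic_subset (G : ℤ → Set C) (b : ℤ) : unionIic C G b ⊆ unionAll C G := by
  intro X hX
  simp only [unionIic, unionAll, Set.mem_iUnion] at *
  obtain ⟨m, _, hm⟩ := hX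
  exact ⟨m, hm⟩

theorem unionIcc_subset_Iic (G : ℤ → Set C) (a b : ℤ) : unionIcc C G a b ⊆ unionIic C G b := by
  intro X hX
  simp only [unionIcc, unionIic, Set.mem_iUnion] at *
  obtain ⟨m, hab, hm⟩ := hX
  exact ⟨m, hab.2, hm⟩

theorem unionIic_mono (G : ℤ → Set C) {a b : ℤ} (h : a ≤ b) :
    unionIic C G a ⊆ unionIic C G b := by
  intro X hX
  simp only [unionIic, Set.mem_iUnion] at *
  obtain ⟨m, hab, hm⟩ := hX
  exact ⟨m, le_trans hab h, hm⟩

theorem factors_of_vanish {G Rm : ℤ → Set C} {A : ℤ} (hG : IsGenSeq C G)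
    (h : IsWeakGQuasiApprox C G Rm A) (k : ℕ) :
    ∀ (i : ℤ) (F : C), F ∈ Rm i ∩ closCompacts C Rm → ∀ (K : C) (φ : K ⟶ F),
      IsCompactObj C K → (∀ Z ∈ Rm (i + k), ∀ f : K ⟶ Z, f = 0) →
      FactorsExt C (unionIic C G (A - i)) φ := by
  induction k with
  | zero =>
    intro i F hF K φ _ hv
    rw [hv F (by simpa using hF.1) φ]
    exact FactorsExt.zero C
  | succ k ih =>
    intro i F hF K φ hK hv
    obtain ⟨E, D, f, g, d, hT, hE, hD⟩ := h.approx i F hF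
    refine FactorsExt.ext C hG (unionIic_subset C G _) f g d hT ?_ hK φ ?_
    · exact factors_of_big C hG (unionIic_subset C G _)
        (bigClosure_mono C (unionIcc_subset_Iic C G _ _) hE)
    · obtain ⟨E', a, b, hE', hab⟩ := ih (i + 1) D hD K (φ ≫ g) hK (by
        have : i + 1 + (k : ℤ) = i + ((k + 1 : ℕ) : ℤ) := by push_cast; ring
        rw [this]; exact hv)
      exact ⟨E', a, b, extClosure_mono C (unionIic_mono C G (by omega)) hE', hab⟩

theorem vanish_of_ext {G Rm : ℤ → Set C} {A : ℤ}
    (h : IsWeakGQuasiApprox C G Rm A) {X : C} (hX : extClosure C (unionAll C G) X) :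
    ∃ N : ℤ, ∀ m : ℤ, N ≤ m → ∀ Z ∈ Rm m, ∀ f : X ⟶ Z, f = 0 := by
  induction hX with
  | @of X hx =>
    simp only [unionAll, Set.mem_iUnion] at hx
    obtain ⟨n, hn⟩ := hx
    exact ⟨A - n, fun m hm Z hZ f => h.hom_vanish n m (by omega) X hn Z hZ f⟩
  | zero hx => exact ⟨0, fun m hm Z hZ f => hx.eq_of_src _ _⟩
  | ext u w k hT _ _ h1 h2 =>
    obtain ⟨N1, h1⟩ := h1
    obtain ⟨N2, h2⟩ := h2
    refine ⟨max N1 N2, fun m hm Z hZ f => ?_⟩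
    obtain ⟨t, ht⟩ := Triangle.yoneda_exact₂ _ hT f
      (h1 m (le_trans (le_max_left _ _) hm) Z hZ (u ≫ f))
    rw [ht, h2 m (le_trans (le_max_right _ _) hm) Z hZ t]
    exact comp_zero

theorem mem_MG {G Rm : ℤ → Set C} {A : ℤ} (hG : IsGenSeq C G)
    (h : IsWeakGQuasiApprox C G Rm A) (i : ℤ) {F : C} (hF : F ∈ Rm i ∩ compacts C) :
    F ∈ MG C G (i - A) := by
  have hF' : F ∈ closCompacts C Rm := by
    simp only [closCompacts, Set.mem_iInter]
    intro n
    exact ⟨F, 0, 𝟙 F, 0, 0, contractible_distinguished F, hF.2,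
      h.orthMetric.zero_mem n 0 (isZero_zero C)⟩
  have hc := hF.2
  rw [← hG.generates] at hc
  obtain ⟨Y, hY, s, r, hsr⟩ := hc
  obtain ⟨N, hN⟩ := vanish_of_ext C h hY
  obtain ⟨E, a, b, hE, hab⟩ := factors_of_vanish C hG h (N - i).toNat i F ⟨hF.1, hF'⟩ F (𝟙 F) hF.2 (by
    intro Z hZ f
    have h0 := hN _ (by omega) Z hZ (r ≫ f)
    have : f = s ≫ r ≫ f := by rw [← Category.assoc, hsr, Category.id_comp]
    rw [this, h0, comp_zero])
  refine ⟨E, ?_, a, b, hab.symm⟩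
  have : -(i - A) = A - i := by ring
  rw [this]
  exact hE

theorem MG_iter {G Rm : ℤ → Set C} {A : ℤ} (h : IsWeakGQuasiApprox C G Rm A) (k : ℕ) :
    ∀ (i : ℤ) (F : C), F ∈ MG C G i →
      ∃ n : ℤ, |n| ≤ k * A ∧ F ∈ shiftSet C n (MG C G (i + k)) := by
  induction k with
  | zero =>
    intro i F hF
    refine ⟨0, by simp, F, by simpa using hF, ⟨((shiftFunctorZero C ℤ).app F).symm⟩⟩
  | succ k ih =>
    intro i F hF
    have h0 := h.cond0 i hF
    simp only [Set.mem_iUnion] at h0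
    obtain ⟨n, hn, F1, hF1, ⟨e⟩⟩ := h0
    obtain ⟨m, hm, F2, hF2, ⟨e'⟩⟩ := ih (i + 1) F1 hF1
    have : i + 1 + (k : ℤ) = i + ((k + 1 : ℕ) : ℤ) := by push_cast; ring
    rw [this] at hF2
    refine ⟨m + n, ?_, F2, hF2,
      ⟨e ≪≫ (shiftFunctor C n).mapIso e' ≪≫ ((shiftFunctorAdd C m n).app F2).symm⟩⟩
    have hn' : |n| ≤ A := hn
    have := abs_add_le m n
    push_cast
    linarith

theorem statement_12 (G Rm : ℤ → Set C) (A : ℤ)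
    (hcg : CompactlyGenerated C) (hG : IsGenSeq C G)
    (h : IsWeakGQuasiApprox C G Rm A) :
    ∃ b : ℤ, 0 ≤ b ∧ ∀ i j : ℤ, 0 < j →
      Rm i ∩ compacts C ⊆
        ⋃ n ∈ {n : ℤ | |n| ≤ (j + 2 * b) * A}, shiftSet C n (Rm (i + j) ∩ compacts C) := by
  refine ⟨A, h.A_pos.le, fun i j hj F hF => ?_⟩
  have hA := h.A_pos
  obtain ⟨n, hn, F', hF', e⟩ := MG_iter C h (j + 2 * A).toNat (i - A) F (mem_MG C hG h i hF)
  rw [Int.toNat_of_nonneg (by omega)] at hn hF'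
  have hi : i - A + (j + 2 * A) = i + j + A := by ring
  rw [hi] at hF'
  simp only [Set.mem_iUnion]
  exact ⟨n, hn, F', h.cond1 _ hF', e⟩

end GApprox
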